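/- Deduction property of implication in LPQ⊃,F: for every finite set Γ of formulas and all formulas A1, A2 of LPQ⊃,F(Σ), Γ ∪ {A1} ⊨ A2 if and only if Γ ⊨ A1 ⊃ A2. -/

import Mathlib

namespace LPQ

/-- The three truth values: true, false, both-true-and-false. -/
inductive TV : Type where
  | t : TV
  | f : TV
  | b : TV
deriving DecidableEq

/-- A first-order signature: function symbols and predicate symbols of each arity. -/
structure Signature : Type 1 where
  Func : ℕ → Type
  Pred : ℕ → Type

/-- Terms over a signature (variables are natural numbers). -/
inductive Term (σ : Signature) : Type where
  | var : ℕ → Term σ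
  | func : {n : ℕ} → σ.Func n → (Fin n → Term σ) → Term σ

/-- Formulas of LPQ⊃,F over a signature. -/
inductive Formula (σ : Signature) : Type where
  | falsum : Formula σ
  | pred : {n : ℕ} → σ.Pred n → (Fin n → Term σ) → Formula σ
  | eq : Term σ → Term σ → Formula σ
  | neg : Formula σ → Formula σ
  | and : Formula σ → Formula σ → Formula σ
  | or : Formula σ → Formula σ → Formula σ
  | imp : Formula σ → Formula σ → Formula σ
  | all : ℕ → Formula σ → Formula σ
  | ex : ℕ → Formula σ → Formula σ

variable {σ : Signature}

/-- Free variables of a term. -/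
def Term.fv : Term σ → Set ℕ
  | .var x => {x}
  | .func _ ts => ⋃ i, (ts i).fv

/-- Free variables of a formula. -/
def Formula.fv : Formula σ → Set ℕ
  | .falsum => ∅
  | .pred _ ts => ⋃ i, (ts i).fv
  | .eq u v => u.fv ∪ v.fv
  | .neg A => A.fv
  | .and A B => A.fv ∪ B.fv
  | .or A B => A.fv ∪ B.fv
  | .imp A B => A.fv ∪ B.fv
  | .all x A => A.fv \ {x}
  | .ex x A => A.fv \ {x}

/-- A structure of LPQ⊃,F(σ): a nonempty domain, interpretations of the function
symbols, three-valued interpretations of the predicate symbols, and a three-valued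
interpretation of equality which is designated on the diagonal. -/
structure Structure (σ : Signature) : Type 1 where
  Dom : Type
  nonempty : Nonempty Dom
  interpFunc : {n : ℕ} → σ.Func n → (Fin n → Dom) → Dom
  interpPred : {n : ℕ} → σ.Pred n → (Fin n → Dom) → TV
  interpEq : Dom → Dom → TV
  interpEq_refl : ∀ d, interpEq d d = TV.t ∨ interpEq d d = TV.b

/-- Value of a term in a structure under an assignment. -/
def Term.eval (M : Structure σ) (α : ℕ → M.Dom) : Term σ → M.Dom
  | .var x => α x
  | .func f ts => M.interpFunc f (fun i => (ts i).eval M α)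

open Classical in
/-- The three-valued interpretation of formulas of LPQ⊃,F. -/
noncomputable def Formula.eval (M : Structure σ) : (ℕ → M.Dom) → Formula σ → TV
  | α, .pred P ts => M.interpPred P (fun i => (ts i).eval M α)
  | α, .eq u v => M.interpEq (u.eval M α) (v.eval M α)
  | _, .falsum => TV.f
  | α, .neg A =>
      match A.eval M α with
      | TV.t => TV.f
      | TV.f => TV.t
      | TV.b => TV.b
  | α, .and A B =>
      match A.eval M α, B.eval M α with
      | TV.t, TV.t => TV.t
      | TV.f, _ => TV.f
      | _, TV.f => TV.f
      | _, _ => TV.b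
  | α, .or A B =>
      match A.eval M α, B.eval M α with
      | TV.t, _ => TV.t
      | _, TV.t => TV.t
      | TV.f, TV.f => TV.f
      | _, _ => TV.b
  | α, .imp A B =>
      match A.eval M α, B.eval M α with
      | TV.f, _ => TV.t
      | _, TV.t => TV.t
      | _, TV.f => TV.f
      | _, _ => TV.b
  | α, .all x A =>
      if ∀ d, Formula.eval M (Function.update α x d) A = TV.t then TV.t
      else if ∃ d, Formula.eval M (Function.update α x d) A = TV.f then TV.f
      else TV.b
  | α, .ex x A =>
      if ∃ d, Formula.eval M (Function.update α x d) A = TV.t then TV.t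
      else if ∀ d, Formula.eval M (Function.update α x d) A = TV.f then TV.f
      else TV.b

/-- Logical consequence of LPQ⊃,F: in every structure under every assignment,
either some premise is false or the conclusion is true or both-true-and-false. -/
def LCon (Γ : Set (Formula σ)) (A : Formula σ) : Prop :=
  ∀ (M : Structure σ) (α : ℕ → M.Dom),
    (∃ B ∈ Γ, B.eval M α = TV.f) ∨ (A.eval M α = TV.t ∨ A.eval M α = TV.b)

/-- Logical equivalence of LPQ⊃,F: the same truth value in every structure
under every assignment. -/
def LEqv (A1 A2 : Formula σ) : Prop :=
  ∀ (M : Structure σ) (α : ℕ → M.Dom), A1.eval M α = A2.eval M α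

end LPQ

namespace LPQ

/-- The designated truth values of LPQ⊃,F, those preserved by logical consequence: both
`TV.t` and `TV.b` count as holding. -/
def TV.Designated (v : TV) : Prop :=
  v = TV.t ∨ v = TV.b

theorem TV.not_designated_iff {v : TV} : ¬v.Designated ↔ v = TV.f := by
  cases v <;> simp [TV.Designated]

variable {σ : Signature}

theorem Formula.designated_eval_imp {M : Structure σ} {α : ℕ → M.Dom} {A B : Formula σ} :
    ((A.imp B).eval M α).Designated ↔ ((A.eval M α).Designated → (B.eval M α).Designated) := by
  rw [Formula.eval]
  cases A.eval M α <;> cases B.eval M α <;> simp [TV.Designated]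

theorem lcon_iff_forall_designated {Γ : Set (Formula σ)} {A : Formula σ} :
    LCon Γ A ↔ ∀ (M : Structure σ) (α : ℕ → M.Dom),
      (∀ B ∈ Γ, (B.eval M α).Designated) → (A.eval M α).Designated := by
  refine forall₂_congr fun M α => ?_
  change (∃ B ∈ Γ, B.eval M α = TV.f) ∨ (A.eval M α).Designated ↔ _
  simp only [← TV.not_designated_iff, or_iff_not_imp_left, not_exists, not_and, not_not]

theorem proper_implication_general (Γ : Set (Formula σ)) (A1 A2 : Formula σ) :
    LCon (Γ ∪ {A1}) A2 ↔ LCon Γ (A1.imp A2) := by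
  rw [lcon_iff_forall_designated, lcon_iff_forall_designated]
  refine forall₂_congr fun M α => ?_
  have premises_iff : (∀ B ∈ Γ ∪ {A1}, (B.eval M α).Designated) ↔
      (∀ B ∈ Γ, (B.eval M α).Designated) ∧ (A1.eval M α).Designated := by
    simp only [Set.mem_union, Set.mem_singleton_iff, or_imp, forall_and, forall_eq]
  rw [premises_iff, and_imp, Formula.designated_eval_imp]

/-- **Deduction property of implication in LPQ⊃,F**: for every finite set Γ of
formulas and all formulas A1, A2, Γ ∪ {A1} ⊨ A2 iff Γ ⊨ A1 ⊃ A2. -/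
theorem proper_implication (σ : Signature) (Γ : Set (Formula σ)) (hΓ : Γ.Finite)
    (A1 A2 : Formula σ) :
    LCon (Γ ∪ {A1}) A2 ↔ LCon Γ (A1.imp A2) :=
  proper_implication_general Γ A1 A2

end LPQ
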